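/- (Constrained Fermat condition) Let X be a real Banach space, let ρ : X → ℝ be Lipschitz, let C ⊆ X be a nonempty closed set, and suppose ξ* ∈ C minimizes ρ over C, i.e. ρ(ξ) ≥ ρ(ξ*) for all ξ ∈ C. Then 0 ∈ ∂°ρ(ξ*) + N_C(ξ*), i.e. there exist ζ ∈ ∂°ρ(ξ*) and ν ∈ N_C(ξ*) with ζ + ν = 0. -/

import Mathlib

/-! The proof is exact penalization followed by a Hahn–Banach sandwich argument.

Since `ρ` is `M`-Lipschitz, `ρ + M • d_C` attains its global minimum at `ξ*`
(`exact_penalty`), so `p + q ≥ 0`, where `p v = ρ°(ξ*; v)` and `q v = M * d_C°(ξ*; v)`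
(`clarkeDeriv_penalty_nonneg`).
Clarke derivatives of Lipschitz functions are sublinear in the direction and bounded by
`K * ‖v‖` (`clarkeDeriv_smul`, `clarkeDeriv_add_le`, `clarkeDeriv_le`). Extending the zero
functional from the diagonal of `X × X` under the sublinear map `(v, w) ↦ p v + q w` produces a
linear `ζ` with `ζ ≤ p` and `-ζ ≤ q` (`exists_linear_between`). The first inequality makes `ζ`
continuous and a Clarke subgradient; the second makes `-ζ` nonpositive on the tangent cone,
where `q` vanishes. -/

open Filter Topology Pointwise NNReal

/-- The generalized (Clarke) directional derivative of `f` at `x` in direction `v`: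
`f°(x;v) = limsup_{y→x, t↓0} (f(y+tv) − f(y))/t`. -/
noncomputable def clarkeDeriv {X : Type*} [NormedAddCommGroup X] [NormedSpace ℝ X]
    (f : X → ℝ) (x v : X) : ℝ :=
  Filter.limsup (fun p : X × ℝ => (f (p.1 + p.2 • v) - f p.1) / p.2)
    ((𝓝 x) ×ˢ (𝓝[>] (0 : ℝ)))

/-- The Clarke subdifferential `∂°f(x) = {ζ ∈ X* : ζ(v) ≤ f°(x;v) for all v}`. -/
def clarkeSubdiff {X : Type*} [NormedAddCommGroup X] [NormedSpace ℝ X]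
    (f : X → ℝ) (x : X) : Set (X →L[ℝ] ℝ) :=
  {ζ | ∀ v, ζ v ≤ clarkeDeriv f x v}

/-- The contingent (tangent) cone `T_C(x) = {v : d_C°(x;v) = 0}`. -/
noncomputable def contingentCone {X : Type*} [NormedAddCommGroup X] [NormedSpace ℝ X]
    (C : Set X) (x : X) : Set X :=
  {v | clarkeDeriv (fun y => Metric.infDist y C) x v = 0}

/-- The normal cone `N_C(x) = {ζ ∈ X* : ζ(v) ≤ 0 for all v ∈ T_C(x)}`. -/
noncomputable def normalCone {X : Type*} [NormedAddCommGroup X] [NormedSpace ℝ X]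
    (C : Set X) (x : X) : Set (X →L[ℝ] ℝ) :=
  {ζ | ∀ v ∈ contingentCone C x, ζ v ≤ 0}

section ClarkeDerivative

variable {X : Type*} [NormedAddCommGroup X] [NormedSpace ℝ X]

theorem abs_quotient_le {f : X → ℝ} {K : ℝ≥0} (hf : LipschitzWith K f) (v y : X) {t : ℝ}
    (ht : 0 < t) : |(f (y + t • v) - f y) / t| ≤ K * ‖v‖ := by
  rw [abs_div, abs_of_pos ht, div_le_iff₀ ht]
  have h := hf.dist_le_mul (y + t • v) y
  rw [Real.dist_eq, dist_eq_norm, add_sub_cancel_left, norm_smul, Real.norm_eq_abs,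
    abs_of_pos ht] at h
  linarith

theorem eventually_snd_pos {X : Type*} [NormedAddCommGroup X] (x : X) :
    ∀ᶠ p : X × ℝ in (𝓝 x) ×ˢ (𝓝[>] (0 : ℝ)), 0 < p.2 :=
  tendsto_snd.eventually self_mem_nhdsWithin

/-- A strict upper bound of the Clarke derivative eventually bounds the difference quotients;
the Lipschitz hypothesis ensures that the real `limsup` is not a junk value. -/
theorem eventually_quotient_lt {f : X → ℝ} {K : ℝ≥0} (hf : LipschitzWith K f) {x v : X} {a : ℝ}
    (h : clarkeDeriv f x v < a) :
    ∀ᶠ p : X × ℝ in (𝓝 x) ×ˢ (𝓝[>] (0 : ℝ)), (f (p.1 + p.2 • v) - f p.1) / p.2 < a := by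
  refine eventually_lt_of_limsup_lt h (isBoundedUnder_of_eventually_le (a := K * ‖v‖) ?_)
  filter_upwards [eventually_snd_pos x] with p hp
  exact (abs_le.1 (abs_quotient_le hf v p.1 hp)).2

theorem clarkeDeriv_le_of_eventually {f : X → ℝ} {K : ℝ≥0} (hf : LipschitzWith K f) {x v : X}
    {a : ℝ} (h : ∀ᶠ p : X × ℝ in (𝓝 x) ×ˢ (𝓝[>] (0 : ℝ)),
      (f (p.1 + p.2 • v) - f p.1) / p.2 ≤ a) :
    clarkeDeriv f x v ≤ a := by
  refine limsup_le_of_le (IsBoundedUnder.isCoboundedUnder_le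
    (isBoundedUnder_of_eventually_ge (a := -(K * ‖v‖)) ?_)) h
  filter_upwards [eventually_snd_pos x] with p hp
  exact (abs_le.1 (abs_quotient_le hf v p.1 hp)).1

theorem clarkeDeriv_le {f : X → ℝ} {K : ℝ≥0} (hf : LipschitzWith K f) (x v : X) :
    clarkeDeriv f x v ≤ K * ‖v‖ := by
  apply clarkeDeriv_le_of_eventually hf
  filter_upwards [eventually_snd_pos x] with p hp
  exact (abs_le.1 (abs_quotient_le hf v p.1 hp)).2

theorem clarkeDeriv_smul_le {f : X → ℝ} {K : ℝ≥0} (hf : LipschitzWith K f) (x v : X) {c : ℝ}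
    (hc : 0 < c) : clarkeDeriv f x (c • v) ≤ c * clarkeDeriv f x v := by
  refine le_of_forall_pos_le_add fun ε hε => clarkeDeriv_le_of_eventually hf ?_
  have hlt : clarkeDeriv f x v < clarkeDeriv f x v + ε / c := by
    linarith [div_pos hε hc]
  have hscale : Tendsto (fun t : ℝ => c * t) (𝓝[>] 0) (𝓝[>] 0) := by
    refine tendsto_nhdsWithin_iff.2 ⟨?_, ?_⟩
    · have : Tendsto (fun t : ℝ => c * t) (𝓝 0) (𝓝 (c * 0)) :=
        (continuous_const.mul continuous_id).tendsto 0
      rw [mul_zero] at this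
      exact this.mono_left nhdsWithin_le_nhds
    · filter_upwards [self_mem_nhdsWithin] with t ht
      exact mul_pos hc ht
  have hmap : Tendsto (fun p : X × ℝ => (p.1, c * p.2)) ((𝓝 x) ×ˢ (𝓝[>] (0 : ℝ)))
      ((𝓝 x) ×ˢ (𝓝[>] (0 : ℝ))) :=
    tendsto_fst.prodMk (hscale.comp tendsto_snd)
  filter_upwards [eventually_snd_pos x, hmap.eventually (eventually_quotient_lt hf hlt)]
    with p hp h
  have e : (f (p.1 + p.2 • c • v) - f p.1) / p.2
      = c * ((f (p.1 + (c * p.2) • v) - f p.1) / (c * p.2)) := by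
    rw [smul_smul, mul_comm p.2 c]
    field_simp
  rw [e]
  calc _ ≤ c * (clarkeDeriv f x v + ε / c) := by gcongr
    _ = _ := by field_simp

theorem clarkeDeriv_smul {f : X → ℝ} {K : ℝ≥0} (hf : LipschitzWith K f) (x v : X) {c : ℝ}
    (hc : 0 < c) : clarkeDeriv f x (c • v) = c * clarkeDeriv f x v := by
  refine le_antisymm (clarkeDeriv_smul_le hf x v hc) ?_
  have h := clarkeDeriv_smul_le hf x (c • v) (inv_pos.2 hc)
  rw [smul_smul, inv_mul_cancel₀ hc.ne', one_smul] at h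
  rwa [← le_inv_mul_iff₀ hc]

theorem clarkeDeriv_add_le {f : X → ℝ} {K : ℝ≥0} (hf : LipschitzWith K f) (x v w : X) :
    clarkeDeriv f x (v + w) ≤ clarkeDeriv f x v + clarkeDeriv f x w := by
  refine le_of_forall_pos_le_add fun ε hε => clarkeDeriv_le_of_eventually hf ?_
  have hv : clarkeDeriv f x v < clarkeDeriv f x v + ε / 2 := by linarith
  have hw : clarkeDeriv f x w < clarkeDeriv f x w + ε / 2 := by linarith
  -- The base point `y + t • v` still tends to `x`, so the quotients in direction `w` may be
  -- taken there.
  have hmap : Tendsto (fun p : X × ℝ => (p.1 + p.2 • v, p.2)) ((𝓝 x) ×ˢ (𝓝[>] (0 : ℝ)))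
      ((𝓝 x) ×ˢ (𝓝[>] (0 : ℝ))) := by
    refine Tendsto.prodMk ?_ tendsto_snd
    have h0 : Tendsto (fun p : X × ℝ => p.2) ((𝓝 x) ×ˢ (𝓝[>] (0 : ℝ))) (𝓝 0) :=
      tendsto_snd.mono_right nhdsWithin_le_nhds
    have h1 : Tendsto (fun p : X × ℝ => p.1) ((𝓝 x) ×ˢ (𝓝[>] (0 : ℝ))) (𝓝 x) := tendsto_fst
    simpa using h1.add (h0.smul_const v)
  filter_upwards [eventually_quotient_lt hf hv, hmap.eventually (eventually_quotient_lt hf hw)]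
    with p h1 h2
  have e : (f (p.1 + p.2 • (v + w)) - f p.1) / p.2
      = (f (p.1 + p.2 • v) - f p.1) / p.2
        + (f (p.1 + p.2 • v + p.2 • w) - f (p.1 + p.2 • v)) / p.2 := by
    rw [smul_add, ← add_assoc, ← add_div]
    congr 1
    ring
  linarith

theorem clarkeDeriv_zero (f : X → ℝ) (x : X) : clarkeDeriv f x 0 = 0 := by
  simp [clarkeDeriv]

/-- A minimizer of an `M`-Lipschitz function over `C` is a global minimizer of the function
penalized by `M` times the distance to `C`. -/
theorem exact_penalty {X : Type*} [NormedAddCommGroup X] {ρ : X → ℝ} {M : ℝ≥0}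
    (hρ : LipschitzWith M ρ) {C : Set X} {x : X} (hx : x ∈ C) (hmin : ∀ ξ ∈ C, ρ x ≤ ρ ξ) (y : X) :
    ρ x ≤ ρ y + M * Metric.infDist y C := by
  refine le_of_forall_pos_le_add fun ε hε => ?_
  have hM : (0 : ℝ) < M + 1 := by positivity
  obtain ⟨c, hc, hlt⟩ := (Metric.infDist_lt_iff (x := y) ⟨x, hx⟩).1
    (lt_add_of_pos_right (Metric.infDist y C) (div_pos hε hM))
  have h1 := hρ.dist_le_mul c y
  rw [Real.dist_eq, dist_comm] at h1
  have h2 : (M : ℝ) * dist y c ≤ M * (Metric.infDist y C + ε / (M + 1)) := by gcongr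
  have h3 : (M : ℝ) * (ε / (M + 1)) ≤ ε := by
    rw [← mul_div_assoc, div_le_iff₀ hM]
    nlinarith
  linarith [hmin c hc, le_abs_self (ρ c - ρ y)]

theorem clarkeDeriv_penalty_nonneg {ρ : X → ℝ} {M : ℝ≥0} (hρ : LipschitzWith M ρ) {C : Set X}
    {x : X} (hx : x ∈ C) (hmin : ∀ ξ ∈ C, ρ x ≤ ρ ξ) (v : X) :
    0 ≤ clarkeDeriv ρ x v + M * clarkeDeriv (fun y => Metric.infDist y C) x v := by
  refine le_of_forall_pos_le_add fun ε hε => ?_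
  have hM : (0 : ℝ) < M + 1 := by positivity
  have hd : LipschitzWith 1 (fun y => Metric.infDist y C) := Metric.lipschitz_infDist_pt C
  have h1 := eventually_quotient_lt hρ (lt_add_of_pos_right (clarkeDeriv ρ x v)
    (div_pos hε hM))
  have h2 := eventually_quotient_lt hd (lt_add_of_pos_right
    (clarkeDeriv (fun y => Metric.infDist y C) x v) (div_pos hε hM))
  -- Specializing the base point to `x` itself suffices.
  have hmap : Tendsto (fun t : ℝ => (x, t)) (𝓝[>] (0 : ℝ)) ((𝓝 x) ×ˢ (𝓝[>] (0 : ℝ))) :=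
    tendsto_const_nhds.prodMk tendsto_id
  obtain ⟨t, ht, h1, h2⟩ := ((eventually_mem_nhdsWithin (a := (0 : ℝ)) (s := Set.Ioi 0)).and
    ((hmap.eventually h1).and (hmap.eventually h2))).exists
  dsimp only at h1 h2
  have ht : 0 < t := ht
  rw [Metric.infDist_zero_of_mem hx, sub_zero] at h2
  have h3 : 0 ≤ (ρ (x + t • v) - ρ x) / t + M * (Metric.infDist (x + t • v) C / t) := by
    rw [← mul_div_assoc, ← add_div]
    refine div_nonneg ?_ ht.le
    linarith [exact_penalty hρ hx hmin (x + t • v)]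
  have h4 : (M : ℝ) * (Metric.infDist (x + t • v) C / t)
      ≤ M * (clarkeDeriv (fun y => Metric.infDist y C) x v + ε / (M + 1)) := by gcongr
  have h5 : ε / (M + 1) + M * (ε / (M + 1)) = ε := by field_simp; ring
  linarith

end ClarkeDerivative

/-- Sandwich form of the Hahn–Banach theorem: if `p`, `q` are sublinear and `0 ≤ p + q`, some
linear functional `ζ` satisfies `ζ ≤ p` and `-ζ ≤ q`. -/
theorem exists_linear_between {E : Type*} [AddCommGroup E] [Module ℝ E] (p q : E → ℝ)
    (hp0 : p 0 = 0) (hq0 : q 0 = 0)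
    (hp : ∀ c : ℝ, 0 < c → ∀ v, p (c • v) = c * p v)
    (hq : ∀ c : ℝ, 0 < c → ∀ v, q (c • v) = c * q v)
    (hpa : ∀ v w, p (v + w) ≤ p v + p w) (hqa : ∀ v w, q (v + w) ≤ q v + q w)
    (hpq : ∀ v, 0 ≤ p v + q v) :
    ∃ ζ : E →ₗ[ℝ] ℝ, (∀ v, ζ v ≤ p v) ∧ ∀ v, -ζ v ≤ q v := by
  let diag : Submodule ℝ (E × E) :=
    LinearMap.range ((LinearMap.id : E →ₗ[ℝ] E).prod LinearMap.id)
  obtain ⟨g, hg, hgle⟩ := exists_extension_of_le_sublinear (⟨diag, 0⟩ : E × E →ₗ.[ℝ] ℝ)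
    (fun z => p z.1 + q z.2)
    (fun c hc z => by simp only [Prod.smul_fst, Prod.smul_snd, hp c hc, hq c hc]; ring)
    (fun z w => by
      simp only [Prod.fst_add, Prod.snd_add]
      linarith [hpa z.1 w.1, hqa z.2 w.2])
    (by
      rintro ⟨_, v, rfl⟩
      exact hpq v)
  have hdiag : ∀ v, g (v, v) = 0 := fun v => hg ⟨(v, v), v, rfl⟩
  refine ⟨g.comp (LinearMap.inl ℝ E E), fun v => ?_, fun v => ?_⟩
  · simpa [hq0] using hgle (v, 0)
  · have h1 : g (v, 0) + g (0, v) = 0 := by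
      rw [← map_add]
      simpa using hdiag v
    have h2 : g (0, v) ≤ p 0 + q v := hgle (0, v)
    change -g (v, 0) ≤ q v
    linarith

/-- Constrained Fermat condition: if `ξ*` minimizes the Lipschitz function `ρ` over the
nonempty closed set `C`, then `0 ∈ ∂°ρ(ξ*) + N_C(ξ*)`. -/
theorem constrained_fermat
    {X : Type*} [NormedAddCommGroup X] [NormedSpace ℝ X] [CompleteSpace X]
    (ρ : X → ℝ) (M : ℝ≥0) (hρ : LipschitzWith M ρ)
    (C : Set X) (hCne : C.Nonempty) (hCclosed : IsClosed C)
    (ξstar : X) (hmem : ξstar ∈ C) (hmin : ∀ ξ ∈ C, ρ ξstar ≤ ρ ξ) :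
    ∃ ζ ∈ clarkeSubdiff ρ ξstar, ∃ ν ∈ normalCone C ξstar, ζ + ν = 0 := by
  have hd : LipschitzWith 1 (fun y => Metric.infDist y C) := Metric.lipschitz_infDist_pt C
  obtain ⟨ζ, hζp, hζq⟩ := exists_linear_between (clarkeDeriv ρ ξstar)
    (fun v => M * clarkeDeriv (fun y => Metric.infDist y C) ξstar v)
    (clarkeDeriv_zero _ _) (by simp [clarkeDeriv_zero])
    (fun c hc v => clarkeDeriv_smul hρ ξstar v hc)
    (fun c hc v => by simp only [clarkeDeriv_smul hd ξstar v hc]; ring)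
    (clarkeDeriv_add_le hρ ξstar)
    (fun v w => by
      rw [← mul_add]
      exact mul_le_mul_of_nonneg_left (clarkeDeriv_add_le hd ξstar v w) M.2)
    (clarkeDeriv_penalty_nonneg hρ hmem hmin)
  have hbound : ∀ v, ‖ζ v‖ ≤ M * ‖v‖ := fun v => by
    have h1 := (hζp v).trans (clarkeDeriv_le hρ ξstar v)
    have h2 := (hζp (-v)).trans (clarkeDeriv_le hρ ξstar (-v))
    rw [map_neg, norm_neg] at h2
    exact abs_le.2 ⟨by linarith, h1⟩
  refine ⟨ζ.mkContinuous M hbound, hζp, -ζ.mkContinuous M hbound, fun v hv => ?_,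
    add_neg_cancel _⟩
  have h := hζq v
  have hv : clarkeDeriv (fun y => Metric.infDist y C) ξstar v = 0 := hv
  simpa [hv] using h
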